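/- Let ν be a σ-finite Borel measure on (0,∞) with ∫₀^∞ (z ∧ z²) ν(dz) < ∞, and let α_ν = inf{β > 1 : lim_{x→0+} x^{β-1} ∫_{(x,∞)} z ν(dz) = 0}. Then for any α > α_ν one has lim_{x→0+} x^{α-2} ∫_{(0,x]} z² ν(dz) = 0. -/

import Mathlib

/-!
Write `G x = ∫_{(x,∞)} z dν`, `H x = ∫_{(0,x]} z² dν`. Dominated convergence with majorant
`min z z²` gives `H x → 0` and `x * G x → 0` as `x → 0+`. The latter says that `β = 2` belongs to
the set defining `α_ν`, so the infimum is over a nonempty set and some admissible `β < α` exists.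

If `β ≥ 2`, then `α > 2` and `H x → 0` is enough. If `β < 2`, then `G y ≤ y ^ (1 - β)` for small
`y`, so `H (2 * y) - H y ≤ 2 * y * G y ≤ 2 * y ^ (2 - β)`. With `γ = 2 - β > 0` and
`K = 2 / (2 ^ γ - 1)` this says that `F x = H x - K * x ^ γ` satisfies `F (2 * y) ≤ F y`; as `F → 0`
at `0+`, iterating gives `F ≤ 0`, that is `H x ≤ K * x ^ (2 - β)`. Multiplying by `x ^ (α - 2)`
leaves `K * x ^ (α - β) → 0`.
-/

open MeasureTheory Filter Set

/-- Iterating `F (2 * y) ≤ F y` along `x / 2 ^ n` compares `F x` with the limit of `F` at `0+`. -/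
lemma nonpos_of_le_half {F : ℝ → ℝ} {δ : ℝ}
    (hF : ∀ y, 0 < y → y < δ → F (2 * y) ≤ F y)
    (hlim : Tendsto F (nhdsWithin 0 (Set.Ioi 0)) (nhds 0)) {x : ℝ} (hx : 0 < x) (hxδ : x < δ) :
    F x ≤ 0 := by
  have hpos : ∀ n : ℕ, 0 < x * (1 / 2) ^ n := fun n => by positivity
  have step : ∀ n : ℕ, F x ≤ F (x * (1 / 2) ^ n) := by
    intro n
    induction n with
    | zero => simp
    | succ n ih =>
      refine ih.trans ?_
      have h1 : x * (1 / 2 : ℝ) ^ (n + 1) < δ :=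
        lt_of_le_of_lt (mul_le_of_le_one_right hx.le
          (pow_le_one₀ (by norm_num) (by norm_num))) hxδ
      have h2 := hF _ (hpos (n + 1)) h1
      rwa [show 2 * (x * (1 / 2 : ℝ) ^ (n + 1)) = x * (1 / 2) ^ n by ring] at h2
  have hseq : Tendsto (fun n : ℕ => x * (1 / 2 : ℝ) ^ n) atTop (nhdsWithin 0 (Set.Ioi 0)) := by
    refine tendsto_nhdsWithin_iff.2 ⟨?_, Eventually.of_forall hpos⟩
    simpa using (tendsto_pow_atTop_nhds_zero_of_lt_one (r := (1 / 2 : ℝ))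
      (by norm_num) (by norm_num)).const_mul x
  exact ge_of_tendsto' (hlim.comp hseq) step

section

variable {ν : Measure ℝ}

lemma ae_pos_of_support (hsupp : ν (Set.Iic 0) = 0) : ∀ᵐ z ∂ν, 0 < z := by
  rw [ae_iff]
  simpa [Set.Iic] using hsupp

lemma integrable_min (hsupp : ν (Set.Iic 0) = 0)
    (hfin : ∫⁻ z, ENNReal.ofReal (min z (z ^ 2)) ∂ν < ⊤) :
    Integrable (fun z : ℝ => min z (z ^ 2)) ν := by
  refine ⟨by fun_prop, ?_⟩
  rw [hasFiniteIntegral_iff_ofReal]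
  · exact hfin
  · filter_upwards [ae_pos_of_support hsupp] with z hz
    exact le_min hz.le (sq_nonneg z)

lemma integrableOn_sq (hg : Integrable (fun z : ℝ => min z (z ^ 2)) ν) {x : ℝ} (hx : x ≤ 1) :
    IntegrableOn (fun z : ℝ => z ^ 2) (Set.Ioc 0 x) ν := by
  refine hg.integrableOn.congr_fun (fun z hz => ?_) measurableSet_Ioc
  exact min_eq_right (by nlinarith [hz.1, hz.2])

lemma integrableOn_id (hg : Integrable (fun z : ℝ => min z (z ^ 2)) ν) {x : ℝ} (hx0 : 0 < x)
    (hx : x ≤ 1) : IntegrableOn (fun z : ℝ => z) (Set.Ioi x) ν := by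
  refine Integrable.mono' (hg.const_mul x⁻¹).integrableOn (by fun_prop) ?_
  filter_upwards [ae_restrict_mem measurableSet_Ioi] with z hz
  have hz : x < z := hz
  rw [Real.norm_of_nonneg (by linarith), ← div_eq_inv_mul, le_div_iff₀ hx0]
  exact le_min (by nlinarith) (by nlinarith)

lemma tendsto_integral_sq (hsupp : ν (Set.Iic 0) = 0)
    (hg : Integrable (fun z : ℝ => min z (z ^ 2)) ν) :
    Tendsto (fun x : ℝ => ∫ z in Set.Ioc 0 x, z ^ 2 ∂ν) (nhdsWithin 0 (Set.Ioi 0)) (nhds 0) := by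
  have key : Tendsto (fun x : ℝ => ∫ z, (Set.Ioc 0 x).indicator (fun z : ℝ => z ^ 2) z ∂ν)
      (nhdsWithin 0 (Set.Ioi 0)) (nhds (∫ _, (0 : ℝ) ∂ν)) := by
    refine tendsto_integral_filter_of_dominated_convergence _
      (Eventually.of_forall fun x => ?_) ?_ hg ?_
    · exact ((measurable_id.pow_const 2).indicator measurableSet_Ioc).aestronglyMeasurable
    · filter_upwards [Ioc_mem_nhdsGT (zero_lt_one' ℝ)] with x hx
      filter_upwards [ae_pos_of_support hsupp] with z hz
      by_cases h : z ∈ Set.Ioc 0 x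
      · rw [Set.indicator_of_mem h, Real.norm_of_nonneg (sq_nonneg z)]
        exact le_min (by nlinarith [h.2, hx.2]) le_rfl
      · rw [Set.indicator_of_notMem h, norm_zero]
        exact le_min hz.le (sq_nonneg z)
    · filter_upwards [ae_pos_of_support hsupp] with z hz
      refine tendsto_const_nhds.congr' ?_
      filter_upwards [Ioo_mem_nhdsGT hz] with x hx
      rw [Set.indicator_of_notMem]
      exact fun h => absurd h.2 (not_le.2 hx.2)
  simpa [integral_indicator measurableSet_Ioc] using key

lemma tendsto_mul_integral_id (hsupp : ν (Set.Iic 0) = 0)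
    (hg : Integrable (fun z : ℝ => min z (z ^ 2)) ν) :
    Tendsto (fun x : ℝ => x * ∫ z in Set.Ioi x, z ∂ν) (nhdsWithin 0 (Set.Ioi 0)) (nhds 0) := by
  have key : Tendsto (fun x : ℝ => ∫ z, (Set.Ioi x).indicator (fun z : ℝ => x * z) z ∂ν)
      (nhdsWithin 0 (Set.Ioi 0)) (nhds (∫ _, (0 : ℝ) ∂ν)) := by
    refine tendsto_integral_filter_of_dominated_convergence _
      (Eventually.of_forall fun x => ?_) ?_ hg ?_
    · exact ((measurable_id.const_mul x).indicator measurableSet_Ioi).aestronglyMeasurable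
    · filter_upwards [Ioc_mem_nhdsGT (zero_lt_one' ℝ)] with x hx
      filter_upwards [ae_pos_of_support hsupp] with z hz
      by_cases h : z ∈ Set.Ioi x
      · have h' : x < z := h
        rw [Set.indicator_of_mem h, Real.norm_of_nonneg (mul_nonneg hx.1.le hz.le)]
        exact le_min (by nlinarith [hx.2]) (by nlinarith)
      · rw [Set.indicator_of_notMem h, norm_zero]
        exact le_min hz.le (sq_nonneg z)
    · refine Eventually.of_forall fun z => ?_
      have h0 : Tendsto (fun x : ℝ => ‖x * z‖) (nhdsWithin 0 (Set.Ioi 0)) (nhds 0) := by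
        have : Tendsto (fun x : ℝ => ‖x * z‖) (nhds 0) (nhds ‖(0 : ℝ) * z‖) :=
          Continuous.tendsto (by fun_prop) 0
        simpa using this.mono_left nhdsWithin_le_nhds
      exact squeeze_zero_norm (fun x => norm_indicator_le_norm_self _ _) h0
  simp only [integral_indicator measurableSet_Ioi, integral_zero] at key
  exact key.congr fun x => integral_const_mul x _

lemma integral_sq_two_mul_le (hg : Integrable (fun z : ℝ => min z (z ^ 2)) ν) {y : ℝ}
    (hy : 0 < y) (hy1 : 2 * y ≤ 1) :
    ∫ z in Set.Ioc 0 (2 * y), z ^ 2 ∂ν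
      ≤ ∫ z in Set.Ioc 0 y, z ^ 2 ∂ν + 2 * y * ∫ z in Set.Ioi y, z ∂ν := by
  have hsq := integrableOn_sq hg hy1
  have hid := integrableOn_id hg hy (by linarith)
  have hsub : Set.Ioc y (2 * y) ⊆ Set.Ioi y := fun z hz => hz.1
  rw [← Set.Ioc_union_Ioc_eq_Ioc hy.le (by linarith : y ≤ 2 * y),
    setIntegral_union (Set.Ioc_disjoint_Ioc_of_le le_rfl) measurableSet_Ioc
      (integrableOn_sq hg (by linarith))
      (hsq.mono_set (Set.Ioc_subset_Ioc_left hy.le)), ← integral_const_mul]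
  gcongr
  calc ∫ z in Set.Ioc y (2 * y), z ^ 2 ∂ν
      ≤ ∫ z in Set.Ioc y (2 * y), 2 * y * z ∂ν := by
        refine setIntegral_mono_on (hsq.mono_set (Set.Ioc_subset_Ioc_left hy.le))
          ((hid.mono_set hsub).const_mul _) measurableSet_Ioc fun z hz => ?_
        nlinarith [hz.1, hz.2]
    _ ≤ ∫ z in Set.Ioi y, 2 * y * z ∂ν := by
        refine setIntegral_mono_set (hid.const_mul _) ?_ hsub.eventuallyLE
        filter_upwards [ae_restrict_mem measurableSet_Ioi] with z hz
        have hz : y < z := hz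
        exact mul_nonneg (by linarith) (by linarith)

end

lemma tendsto_rpow_zero_right {γ : ℝ} (hγ : 0 < γ) :
    Tendsto (fun x : ℝ => x ^ γ) (nhdsWithin 0 (Set.Ioi 0)) (nhds 0) := by
  have := (Real.continuousAt_rpow_const 0 γ (Or.inr hγ.le)).tendsto
  rw [Real.zero_rpow hγ.ne'] at this
  exact this.mono_left nhdsWithin_le_nhds

/-- For α > α_ν := inf{β > 1 : x^{β-1}∫_{(x,∞)} z ν(dz) → 0 as x → 0+},
one has x^{α-2} ∫_{(0,x]} z² ν(dz) → 0 as x → 0+. -/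
theorem stmt3 (ν : Measure ℝ) [SigmaFinite ν] (hsupp : ν (Set.Iic 0) = 0)
    (hfin : ∫⁻ z, ENNReal.ofReal (min z (z ^ 2)) ∂ν < ⊤) :
    ∀ α : ℝ,
      sInf {β : ℝ | 1 < β ∧
          Tendsto (fun x : ℝ => x ^ (β - 1) * ∫ z in Set.Ioi x, z ∂ν)
            (nhdsWithin 0 (Set.Ioi 0)) (nhds 0)} < α →
      Tendsto (fun x : ℝ => x ^ (α - 2) * ∫ z in Set.Ioc 0 x, z ^ 2 ∂ν)
        (nhdsWithin 0 (Set.Ioi 0)) (nhds 0) := by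
  intro α hα
  have hg := integrable_min hsupp hfin
  have hH := tendsto_integral_sq hsupp hg
  -- Nonemptiness rules out the junk value `sInf ∅ = 0`.
  obtain ⟨β, ⟨-, hβ⟩, hβα⟩ := exists_lt_of_csInf_lt (by
    refine ⟨2, one_lt_two, (tendsto_mul_integral_id hsupp hg).congr fun x => ?_⟩
    rw [show (2 : ℝ) - 1 = 1 by norm_num, Real.rpow_one]) hα
  rcases le_or_gt 2 β with h2 | h2
  · simpa using (tendsto_rpow_zero_right (by linarith : 0 < α - 2)).mul hH
  obtain ⟨γ, rfl⟩ : ∃ γ, β = 2 - γ := ⟨2 - β, by ring⟩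
  have hγ : 0 < γ := by linarith
  obtain ⟨δ, hδ, hGδ⟩ := mem_nhdsGT_iff_exists_Ioo_subset.1 (hβ.eventually_le_const zero_lt_one)
  have hδ : 0 < δ := hδ
  have h2γ : 0 < (2 : ℝ) ^ γ - 1 := sub_pos.2 (Real.one_lt_rpow one_lt_two hγ)
  -- `K` solves `K * (2 * y) ^ γ = K * y ^ γ + 2 * y ^ γ`.
  set K : ℝ := 2 / ((2 : ℝ) ^ γ - 1) with hK
  have hbound : ∀ x, 0 < x → x < min δ (1 / 2) →
      (∫ z in Set.Ioc 0 x, z ^ 2 ∂ν) - K * x ^ γ ≤ 0 := by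
    intro x hx hxδ
    refine nonpos_of_le_half (F := fun x => (∫ z in Set.Ioc 0 x, z ^ 2 ∂ν) - K * x ^ γ)
      (fun y hy hyδ => ?_) ?_ hx hxδ
    · have hy1 := lt_of_lt_of_le hyδ (min_le_right _ _)
      have h := integral_sq_two_mul_le hg hy (by linarith)
      have hG : y ^ (2 - γ - 1) * ∫ z in Set.Ioi y, z ∂ν ≤ 1 :=
        hGδ ⟨hy, lt_of_lt_of_le hyδ (min_le_left _ _)⟩
      have hyG : y * ∫ z in Set.Ioi y, z ∂ν ≤ y ^ γ := by
        calc y * ∫ z in Set.Ioi y, z ∂ν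
            = y ^ γ * (y ^ (2 - γ - 1) * ∫ z in Set.Ioi y, z ∂ν) := by
              rw [← mul_assoc, ← Real.rpow_add hy,
                show γ + (2 - γ - 1) = 1 by ring, Real.rpow_one]
          _ ≤ y ^ γ * 1 := by gcongr
          _ = y ^ γ := mul_one _
      have hKy : K * (2 * y) ^ γ = K * y ^ γ + 2 * y ^ γ := by
        rw [Real.mul_rpow zero_le_two hy.le, hK]
        field_simp
        ring
      linarith
    · simpa using hH.sub ((tendsto_rpow_zero_right hγ).const_mul K)
  have hlim : Tendsto (fun x : ℝ => K * x ^ (α - 2 + γ)) (nhdsWithin 0 (Set.Ioi 0)) (nhds 0) := by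
    simpa using (tendsto_rpow_zero_right (by linarith : 0 < α - 2 + γ)).const_mul K
  refine squeeze_zero' ?_ ?_ hlim
  · filter_upwards [self_mem_nhdsWithin] with x hx
    exact mul_nonneg (Real.rpow_nonneg (le_of_lt hx) _) (integral_nonneg fun z => sq_nonneg z)
  · filter_upwards [Ioo_mem_nhdsGT (lt_min hδ (by norm_num : (0 : ℝ) < 1 / 2))] with x hx
    have hx0 : 0 < x := hx.1
    calc x ^ (α - 2) * ∫ z in Set.Ioc 0 x, z ^ 2 ∂ν
        ≤ x ^ (α - 2) * (K * x ^ γ) := by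
          gcongr
          linarith [hbound x hx.1 hx.2]
      _ = K * x ^ (α - 2 + γ) := by
          rw [Real.rpow_add hx0]
          ring
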